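/- Let Y_i be a finite nonempty set, let Y_{−i} be a finite nonempty set, let v : Y_i × Y_{−i} → ℝ, and fix y_i ∈ Y_i. Define h(ỹ_i) = min_{y_{−i} ∈ Y_{−i}} ( v(y_i, y_{−i}) − v(ỹ_i, y_{−i}) ) for ỹ_i ∈ Y_i, and note h(y_i) = 0. Let γ be the Gumbel probability measure on ℝ and let ν be the product measure on Y_i → ℝ whose coordinates are independent copies of γ. Then ν({ e : Y_i → ℝ : for all ỹ_i ∈ Y_i with ỹ_i ≠ y_i and all y_{−i} ∈ Y_{−i}, v(y_i, y_{−i}) + e(y_i) > v(ỹ_i, y_{−i}) + e(ỹ_i) }) = 1 / ∑_{ỹ_i ∈ Y_i} exp(−h(ỹ_i)). That is, the probability that y_i is a strictly dominant strategy equals 1 / ∑_{ỹ_i} exp(−h(ỹ_i)). -/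

import Mathlib

open MeasureTheory Real

/-!
Write `F m x = exp (-exp (-(x - m)))` for the Gumbel cdf with location `m`; its density is
`exp (m - x) * F m x`. Products of these cdfs are again Gumbel cdfs: `∏ t, F (m t) = F M` with
`M = log ∑ t, exp (m t)`. Hence the density of the event that the `i`-th of several independent
Gumbel variables is the largest and takes the value `x` is
`exp (m i - x) * ∏ t, F (m t) x = exp (m i - M) * (exp (M - x) * F M x)`, a multiple of a Gumbel
density, and integrating leaves the logit probability `exp (m i) / ∑ t, exp (m t)`.

Strict dominance of `y` says that `e y`, of location `0`, exceeds every `e ỹ - h ỹ`, of location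
`-h ỹ`.
-/

open Filter Set Topology
open scoped ENNReal

theorem lintegral_Ioi_ofReal_of_hasDerivAt_of_nonneg {g g' : ℝ → ℝ} {a l : ℝ}
    (hderiv : ∀ x ∈ Ici a, HasDerivAt g (g' x) x) (hnonneg : ∀ x ∈ Ioi a, 0 ≤ g' x)
    (hg : Tendsto g atTop (𝓝 l)) :
    ∫⁻ x in Ioi a, ENNReal.ofReal (g' x) = ENNReal.ofReal (l - g a) := by
  rw [← integral_Ioi_of_hasDerivAt_of_nonneg' hderiv hnonneg hg,
    ofReal_integral_eq_lintegral_ofReal (integrableOn_Ioi_deriv_of_nonneg' hderiv hnonneg hg)]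
  exact ae_restrict_of_forall_mem measurableSet_Ioi hnonneg

section ProductMeasure

variable {ι : Type*} [Fintype ι] [DecidableEq ι] {α : ι → Type*} [∀ t, MeasurableSpace (α t)]
  (μ : ∀ t, Measure (α t)) [∀ t, SigmaFinite (μ t)]

theorem pi_setOf_forall_ne_mem (i : ι) {S : ∀ t, Set (α i × α t)}
    (hS : ∀ t, t ≠ i → MeasurableSet (S t)) :
    Measure.pi μ {e | ∀ t, t ≠ i → (e i, e t) ∈ S t}
      = ∫⁻ x, ∏ t : {t // t ≠ i}, μ t (Prod.mk x ⁻¹' S t) ∂μ i := by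
  let T : Set ((∀ t : {t // t = i}, α t) × (∀ t : {t // t ≠ i}, α t)) :=
    {p | ∀ t : {t // t ≠ i}, (p.1 ⟨i, rfl⟩, p.2 t) ∈ S t}
  have hT : MeasurableSet T := by
    simp only [T, ofPred_forall]
    refine MeasurableSet.iInter fun t ↦ measurableSet_preimage ?_ (hS t t.2)
    fun_prop
  have hsection (x : ∀ t : {t // t = i}, α t) :
      Prod.mk x ⁻¹' T = univ.pi fun t : {t // t ≠ i} ↦ Prod.mk (x ⟨i, rfl⟩) ⁻¹' S t := by
    ext y
    simp [T]
  have hpre : {e : ∀ t, α t | ∀ t, t ≠ i → (e i, e t) ∈ S t}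
      = MeasurableEquiv.piEquivPiSubtypeProd α (· = i) ⁻¹' T := by
    ext e
    simp [T, MeasurableEquiv.piEquivPiSubtypeProd, Equiv.piEquivPiSubtypeProd]
  rw [hpre, (measurePreserving_piEquivPiSubtypeProd μ (· = i)).measure_preimage
    hT.nullMeasurableSet, Measure.prod_apply hT]
  simp only [hsection, Measure.pi_pi]
  -- Overrides `Fintype.subtypeEq`, which differs from the instance in the product above.
  let _ : Fintype {t // t = i} := Subtype.fintype (· = i)
  exact ((measurePreserving_piUnique fun t : {t // t = i} ↦ μ t).lintegral_map_equiv
    (fun x ↦ ∏ t : {t // t ≠ i}, μ t (Prod.mk x ⁻¹' S t)) _).symm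

end ProductMeasure

/-- The cumulative distribution function of the Gumbel law with location `m` and scale `1`. -/
noncomputable def gumbelCDFReal (m x : ℝ) : ℝ := exp (-exp (-(x - m)))

/-- The Lebesgue density of the Gumbel law with location `m` and scale `1`. -/
noncomputable def gumbelPDFReal (m x : ℝ) : ℝ := exp (-(x - m) - exp (-(x - m)))

/-- The Gumbel (type 1 extreme value) law with location `m` and scale `1`. -/
noncomputable def gumbelMeasure (m : ℝ) : Measure ℝ :=
  volume.withDensity fun x ↦ ENNReal.ofReal (gumbelPDFReal m x)

section Gumbel

variable (m x : ℝ)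

theorem gumbelCDFReal_nonneg : 0 ≤ gumbelCDFReal m x := (exp_pos _).le

theorem gumbelCDFReal_le_one : gumbelCDFReal m x ≤ 1 :=
  exp_le_one_iff.2 (neg_nonpos.2 (exp_pos _).le)

theorem gumbelPDFReal_nonneg : 0 ≤ gumbelPDFReal m x := (exp_pos _).le

theorem measurable_gumbelPDFReal : Measurable (gumbelPDFReal m) := by
  unfold gumbelPDFReal
  fun_prop

theorem gumbelPDFReal_eq_exp_mul_gumbelCDFReal :
    gumbelPDFReal m x = exp (m - x) * gumbelCDFReal m x := by
  rw [gumbelPDFReal, gumbelCDFReal, ← exp_add, sub_eq_add_neg, neg_sub]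

theorem hasDerivAt_gumbelCDFReal : HasDerivAt (gumbelCDFReal m) (gumbelPDFReal m x) x := by
  have hinner : HasDerivAt (fun x ↦ -exp (-(x - m))) (exp (-(x - m))) x := by
    simpa using (((hasDerivAt_id' x).sub_const m).fun_neg.exp).fun_neg
  refine hinner.exp.congr_deriv ?_
  rw [gumbelPDFReal_eq_exp_mul_gumbelCDFReal, gumbelCDFReal, neg_sub, mul_comm]

theorem tendsto_gumbelCDFReal_atTop : Tendsto (gumbelCDFReal m) atTop (𝓝 1) := by
  have hexp : Tendsto (fun x ↦ exp (-(x - m))) atTop (𝓝 0) :=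
    tendsto_exp_neg_atTop_nhds_zero.comp (tendsto_atTop_add_const_right _ (-m) tendsto_id)
  rw [← exp_zero, ← neg_zero]
  exact hexp.neg.rexp

theorem tendsto_gumbelCDFReal_atBot : Tendsto (gumbelCDFReal m) atBot (𝓝 0) := by
  have hneg : Tendsto (fun x ↦ -(x - m)) atBot atTop :=
    tendsto_neg_atBot_atTop.comp (tendsto_atBot_add_const_right _ (-m) tendsto_id)
  exact tendsto_exp_neg_atTop_nhds_zero.comp (tendsto_exp_atTop.comp hneg)

theorem gumbelMeasure_Ici : gumbelMeasure m (Ici x) = ENNReal.ofReal (1 - gumbelCDFReal m x) := by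
  rw [gumbelMeasure, withDensity_apply _ measurableSet_Ici, setLIntegral_congr Ioi_ae_eq_Ici.symm]
  exact lintegral_Ioi_ofReal_of_hasDerivAt_of_nonneg (fun y _ ↦ hasDerivAt_gumbelCDFReal m y)
    (fun y _ ↦ gumbelPDFReal_nonneg m y) (tendsto_gumbelCDFReal_atTop m)

instance isProbabilityMeasure_gumbelMeasure : IsProbabilityMeasure (gumbelMeasure m) where
  measure_univ := by
    refine tendsto_nhds_unique (tendsto_measure_Ici_atBot (gumbelMeasure m)) ?_
    simpa [gumbelMeasure_Ici] using
      ENNReal.tendsto_ofReal ((tendsto_gumbelCDFReal_atBot m).const_sub 1)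

theorem gumbelMeasure_Iio : gumbelMeasure m (Iio x) = ENNReal.ofReal (gumbelCDFReal m x) := by
  rw [← compl_Ici, prob_compl_eq_one_sub measurableSet_Ici, gumbelMeasure_Ici,
    ← ENNReal.ofReal_one, ← ENNReal.ofReal_sub _ (sub_nonneg.2 (gumbelCDFReal_le_one m x)),
    sub_sub_cancel]

theorem measurePreserving_add_gumbelMeasure (c : ℝ) :
    MeasurePreserving (c + ·) (gumbelMeasure m) (gumbelMeasure (c + m)) := by
  have hmeas : Measurable (c + · : ℝ → ℝ) := measurable_const_add c
  have := Measure.isProbabilityMeasure_map (μ := gumbelMeasure m) hmeas.aemeasurable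
  refine ⟨hmeas, Measure.ext_of_Ici _ _ fun a ↦ ?_⟩
  rw [Measure.map_apply hmeas measurableSet_Ici, preimage_const_add_Ici, gumbelMeasure_Ici,
    gumbelMeasure_Ici, gumbelCDFReal, gumbelCDFReal, sub_sub]

theorem lintegral_ofReal_gumbelPDFReal : ∫⁻ x, ENNReal.ofReal (gumbelPDFReal m x) = 1 := by
  simpa [gumbelMeasure] using measure_univ (μ := gumbelMeasure m)

end Gumbel

section Logit

variable {ι : Type*} [Fintype ι] (m : ι → ℝ) (i : ι)

theorem prod_gumbelCDFReal [Nonempty ι] (x : ℝ) :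
    ∏ t, gumbelCDFReal (m t) x = gumbelCDFReal (log (∑ t, exp (m t))) x := by
  have hsum : 0 < ∑ t, exp (m t) := by positivity
  simp only [gumbelCDFReal, neg_sub, exp_sub, exp_log hsum]
  rw [← exp_sum, Finset.sum_neg_distrib, Finset.sum_div]

theorem gumbelPDFReal_mul_prod_gumbelCDFReal [DecidableEq ι] (x : ℝ) :
    gumbelPDFReal (m i) x * ∏ t : {t // t ≠ i}, gumbelCDFReal (m t) x
      = exp (m i) / (∑ t, exp (m t)) * gumbelPDFReal (log (∑ t, exp (m t))) x := by
  have : Nonempty ι := ⟨i⟩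
  have hsum : 0 < ∑ t, exp (m t) := by positivity
  calc gumbelPDFReal (m i) x * ∏ t : {t // t ≠ i}, gumbelCDFReal (m t) x
      = exp (m i - x) * ∏ t, gumbelCDFReal (m t) x := by
        rw [gumbelPDFReal_eq_exp_mul_gumbelCDFReal, mul_assoc,
          Fintype.prod_eq_mul_prod_subtype_ne _ i]
    _ = exp (m i) / (∑ t, exp (m t)) * gumbelPDFReal (log (∑ t, exp (m t))) x := by
        rw [prod_gumbelCDFReal, gumbelPDFReal_eq_exp_mul_gumbelCDFReal, exp_sub, exp_sub,
          exp_log hsum]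
        field_simp

theorem pi_gumbelMeasure_setOf_forall_ne_lt :
    Measure.pi (fun t ↦ gumbelMeasure (m t)) {e | ∀ t, t ≠ i → e t < e i}
      = ENNReal.ofReal (exp (m i) / ∑ t, exp (m t)) := by
  classical
  calc Measure.pi (fun t ↦ gumbelMeasure (m t)) {e | ∀ t, t ≠ i → e t < e i}
      = ∫⁻ x, ∏ t : {t // t ≠ i}, gumbelMeasure (m t) (Iio x) ∂gumbelMeasure (m i) :=
        pi_setOf_forall_ne_mem (fun t ↦ gumbelMeasure (m t)) i
          fun _ _ ↦ measurableSet_lt measurable_snd measurable_fst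
    _ = ∫⁻ x, ENNReal.ofReal (exp (m i) / ∑ t, exp (m t)) *
          ENNReal.ofReal (gumbelPDFReal (log (∑ t, exp (m t))) x) := by
        rw [gumbelMeasure, lintegral_withDensity_eq_lintegral_mul_non_measurable _
          (measurable_gumbelPDFReal _).ennreal_ofReal
          (ae_of_all _ fun _ ↦ ENNReal.ofReal_lt_top)]
        refine lintegral_congr fun x ↦ ?_
        simp only [Pi.mul_apply, gumbelMeasure_Iio]
        rw [← ENNReal.ofReal_prod_of_nonneg fun _ _ ↦ gumbelCDFReal_nonneg _ x,
          ← ENNReal.ofReal_mul (gumbelPDFReal_nonneg _ x),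
          gumbelPDFReal_mul_prod_gumbelCDFReal, ENNReal.ofReal_mul (by positivity)]
    _ = ENNReal.ofReal (exp (m i) / ∑ t, exp (m t)) := by
        rw [lintegral_const_mul _ (measurable_gumbelPDFReal _).ennreal_ofReal,
          lintegral_ofReal_gumbelPDFReal, mul_one]

theorem pi_gumbelMeasure_setOf_forall_ne_add_lt_add (c : ι → ℝ) :
    Measure.pi (fun t ↦ gumbelMeasure (m t)) {e | ∀ t, t ≠ i → c t + e t < c i + e i}
      = ENNReal.ofReal (exp (c i + m i) / ∑ t, exp (c t + m t)) := by
  have hmeas : MeasurableSet {e : ι → ℝ | ∀ t, t ≠ i → e t < e i} := by measurability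
  rw [← pi_gumbelMeasure_setOf_forall_ne_lt fun t ↦ c t + m t]
  exact (measurePreserving_pi _ _ fun t ↦
    measurePreserving_add_gumbelMeasure (m t) (c t)).measure_preimage hmeas.nullMeasurableSet

end Logit

section DominanceMargin

variable {Y Z G : Type*} [Fintype Z] [Nonempty Z] [AddCommGroup G] [LinearOrder G]

/-- The margin `h(y')` by which action `y` beats `y'` under the payoff `v` against the least
favourable opponents' profile. -/
def dominanceMargin (v : Y → Z → G) (y y' : Y) : G :=
  Finset.univ.inf' Finset.univ_nonempty fun z ↦ v y z - v y' z

theorem dominanceMargin_self (v : Y → Z → G) (y : Y) : dominanceMargin v y y = 0 := by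
  simp [dominanceMargin]

theorem forall_add_lt_add_iff_neg_dominanceMargin_add_lt [IsOrderedAddMonoid G] (v : Y → Z → G)
    (y y' : Y) (a b : G) :
    (∀ z, v y' z + a < v y z + b) ↔ -dominanceMargin v y y' + a < b := by
  rw [neg_add_lt_iff_lt_add, ← sub_lt_iff_lt_add, dominanceMargin, Finset.lt_inf'_iff]
  simp only [Finset.mem_univ, true_imp_iff]
  refine forall_congr' fun z ↦ ?_
  rw [sub_lt_sub_iff, add_comm a, add_comm]

end DominanceMargin

/-- Under i.i.d. Gumbel own-action shocks, the probability that `y_i` is a strictly dominant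
strategy equals `1 / ∑_{ỹ_i} exp (-h(ỹ_i))`, where
`h(ỹ_i) = min_{y_{-i}} (v(y_i, y_{-i}) - v(ỹ_i, y_{-i}))`. -/
theorem dominant_strategy_probability (Yi : Type*) [Fintype Yi] [Nonempty Yi]
    (Ymi : Type*) [Fintype Ymi] [Nonempty Ymi]
    (v : Yi → Ymi → ℝ) (yi : Yi)
    (γ : Measure ℝ) [IsProbabilityMeasure γ]
    (hγ : γ = volume.withDensity fun x => ENNReal.ofReal (Real.exp (-x - Real.exp (-x)))) :
    Measure.pi (fun _ : Yi => γ)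
        {e : Yi → ℝ |
          ∀ tyi : Yi, tyi ≠ yi → ∀ ymi : Ymi,
            v tyi ymi + e tyi < v yi ymi + e yi}
      = ENNReal.ofReal
          (1 /
            ∑ tyi : Yi,
              Real.exp
                (-(Finset.univ.inf' Finset.univ_nonempty fun ymi =>
                    v yi ymi - v tyi ymi))) := by
  have hγ_gumbel : γ = gumbelMeasure 0 := by simp only [hγ, gumbelMeasure, gumbelPDFReal, sub_zero]
  calc
    _ = Measure.pi (fun _ : Yi ↦ gumbelMeasure 0) {e | ∀ tyi, tyi ≠ yi →
          -dominanceMargin v yi tyi + e tyi < -dominanceMargin v yi yi + e yi} := by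
        simp only [hγ_gumbel, forall_add_lt_add_iff_neg_dominanceMargin_add_lt,
          dominanceMargin_self, neg_zero, zero_add]
    _ = ENNReal.ofReal (exp (-dominanceMargin v yi yi) /
          ∑ tyi, exp (-dominanceMargin v yi tyi)) := by
        simpa only [add_zero] using pi_gumbelMeasure_setOf_forall_ne_add_lt_add (fun _ ↦ 0) yi
          fun tyi ↦ -dominanceMargin v yi tyi
    _ = ENNReal.ofReal (1 / ∑ tyi, exp (-dominanceMargin v yi tyi)) := by
        rw [dominanceMargin_self, neg_zero, exp_zero]
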